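/- arXiv:2012.08779 — 4 statements merged into one kernel-verified Lean document; each statement's English description precedes it below -/
import Mathlib

section
/- Let T be an N×N complex unitary matrix (TᴴT = I), let w ∈ ℂ^N, and let λ > 0 and c > 0. Define the soft-thresholding map S : ℂ^N → ℂ^N by S(u)ₙ = 0 if |uₙ| ≤ λ/c and S(u)ₙ = (1 − (λ/c)/|uₙ|) uₙ otherwise, and set x̂ = TᴴS(Tw). Then x̂ minimizes the function x ↦ λ‖Tx‖₁ + (c/2)‖x − w‖₂² over ℂ^N, where ‖v‖₁ = Σₙ |vₙ| is the sum of the moduli of the entries. (Closed form of the proximal operator of λ‖T·‖₁ for unitary T.) -/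
/-!
A unitary `T` preserves the Euclidean norm, so in the coordinates `v = T x`, `u = T w` the objective
is `∑ n, (lam * ‖v n‖ + (c / 2) * ‖v n - u n‖ ^ 2)`, which separates over the entries; `T Tᴴ = 1`
turns the candidate `Tᴴ S(T w)` into `S u`. It remains to minimize each term
(`soft_threshold_scalar`): by the reverse triangle inequality `‖z - a‖ ≥ |‖z‖ - ‖a‖|` this is a
one-variable quadratic inequality in `‖z‖`.
-/

open Matrix

/-- Soft thresholding is the proximal operator of the modulus on `ℂ`. -/
lemma soft_threshold_scalar (lam c : ℝ) (hlam : 0 < lam) (hc : 0 < c) (a s z : ℂ)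
    (hs : s = if ‖a‖ ≤ lam / c then 0 else ((1 - (lam / c) / ‖a‖ : ℝ) : ℂ) * a) :
    lam * ‖s‖ + (c / 2) * ‖s - a‖ ^ 2 ≤ lam * ‖z‖ + (c / 2) * ‖z - a‖ ^ 2 := by
  obtain ⟨t, rfl⟩ : ∃ t, lam = c * t := ⟨lam / c, by field_simp⟩
  have ht : 0 < t := pos_of_mul_pos_right hlam hc.le
  rw [mul_div_cancel_left₀ t hc.ne'] at hs
  have hrev : (‖z‖ - ‖a‖) ^ 2 ≤ ‖z - a‖ ^ 2 :=
    sq_le_sq' (by linarith [norm_sub_norm_le a z, norm_sub_rev a z]) (norm_sub_norm_le z a)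
  have hz := norm_nonneg z
  split_ifs at hs with h
  · subst hs
    have h1 : 0 ≤ ‖z‖ * (t - ‖a‖) := mul_nonneg hz (by linarith)
    have h2 : ‖a‖ ^ 2 ≤ 2 * t * ‖z‖ + ‖z - a‖ ^ 2 := by nlinarith [sq_nonneg ‖z‖]
    simp only [norm_zero, zero_sub, norm_neg]
    nlinarith
  · push Not at h
    have ha : 0 < ‖a‖ := ht.trans h
    have hn : ‖s‖ = ‖a‖ - t := by
      have : 0 ≤ 1 - t / ‖a‖ := by
        rw [sub_nonneg, div_le_one ha]; exact h.le
      rw [hs, norm_mul, Complex.norm_real, Real.norm_of_nonneg this]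
      field_simp
    have hd : ‖s - a‖ = t := by
      have : s - a = ((-(t / ‖a‖) : ℝ) : ℂ) * a := by rw [hs]; push_cast; ring
      rw [this, norm_mul, Complex.norm_real, norm_neg, Real.norm_of_nonneg (by positivity)]
      field_simp
    rw [hn, hd]
    -- After the reverse triangle inequality the gap is `(c / 2) * (‖z‖ - (‖a‖ - t)) ^ 2`.
    have h2 : 2 * t * (‖a‖ - t) + t ^ 2 ≤ 2 * t * ‖z‖ + ‖z - a‖ ^ 2 := by
      nlinarith [sq_nonneg (‖z‖ - ‖a‖ + t)]
    nlinarith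

lemma sum_norm_sq_mulVec_of_unitary {N : ℕ} (T : Matrix (Fin N) (Fin N) ℂ) (hT : Tᴴ * T = 1)
    (y : Fin N → ℂ) : ∑ n, ‖(T *ᵥ y) n‖ ^ 2 = ∑ n, ‖y n‖ ^ 2 := by
  have key (v : Fin N → ℂ) : ((∑ n, ‖v n‖ ^ 2 : ℝ) : ℂ) = star v ⬝ᵥ v := by
    simp [dotProduct, Complex.conj_mul']
  apply Complex.ofReal_injective
  rw [key, key, star_mulVec, ← dotProduct_mulVec, mulVec_mulVec, hT, one_mulVec]

theorem prox_l1_unitary_soft_thresholding {N : ℕ}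
    (T : Matrix (Fin N) (Fin N) ℂ) (hT : Tᴴ * T = 1)
    (w : Fin N → ℂ) (lam c : ℝ) (hlam : 0 < lam) (hc : 0 < c)
    (S : (Fin N → ℂ) → (Fin N → ℂ))
    (hS : ∀ u n, S u n = if ‖u n‖ ≤ lam / c then 0 else ((1 - (lam / c) / ‖u n‖ : ℝ) : ℂ) * u n) :
    ∀ x : Fin N → ℂ,
      lam * (∑ n, ‖T.mulVec (Tᴴ.mulVec (S (T.mulVec w))) n‖)
          + (c / 2) * ∑ n, ‖Tᴴ.mulVec (S (T.mulVec w)) n - w n‖ ^ 2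
        ≤ lam * (∑ n, ‖T.mulVec x n‖) + (c / 2) * ∑ n, ‖x n - w n‖ ^ 2 := by
  intro x
  have hT' : T * Tᴴ = 1 := mul_eq_one_comm.mp hT
  have hdist (y : Fin N → ℂ) :
      ∑ n, ‖y n - w n‖ ^ 2 = ∑ n, ‖(T *ᵥ y) n - (T *ᵥ w) n‖ ^ 2 := by
    have h := sum_norm_sq_mulVec_of_unitary T hT (y - w)
    rw [mulVec_sub] at h
    exact h.symm
  rw [hdist, hdist x, mulVec_mulVec, hT', one_mulVec]
  simp only [Finset.mul_sum, ← Finset.sum_add_distrib]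
  exact Finset.sum_le_sum fun n _ => soft_threshold_scalar lam c hlam hc _ _ _ (hS _ n)
end

section
/- Let B₁,…,B_T be L×N complex matrices, λ₁ > 0, and ξ > 0, and define g : ℝ^N → ℝ by g(m) = λ₁ Σ_{ℓ=1}^{L} h_ξ( √(Σ_{t=1}^{T} |[B_t m]_ℓ|²) ). Then g is differentiable, and its gradient at any m ∈ ℝ^N is ∇g(m) = Re{ λ₁ Σ_{t=1}^{T} B_tᴴ W(m) B_t m }, where W(m) is the L×L diagonal matrix with ℓ-th diagonal entry [W(m)]_{ℓℓ} = 1 / max{ ξ, √(Σ_{t=1}^{T} |[B_t m]_ℓ|²) }, and Re{·} extracts the real part elementwise. -/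
/-!
With `u = ∑ t, |[B_t m]_ℓ|²`, each summand is `ψ u`, where `ψ u = h_ξ (√u)` for `u ≥ 0`. Extending the
quadratic branch of the Huber function linearly to `u < 0` (`huberSq`) makes `ψ` differentiable on all
of `ℝ`, with `ψ' u = 1 / (2 max ξ √u)` (`hasDerivAt_huberSq`); working with `u` instead of `√u`
avoids the singularity of the square root at `0`. The result is then the chain rule with the quadratic
form `m ↦ u`, and the gradient is read off by applying the derivative to the standard basis vectors.
-/


open Matrix

/-- The Huber function with parameter `ξ`. -/
noncomputable def huber (ξ t : ℝ) : ℝ := if |t| ≤ ξ then |t| ^ 2 / (2 * ξ) else |t| - ξ / 2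

/-- The function `u ↦ h_ξ (√u)` on `u ≥ 0`, with the branch `u / (2 ξ)` extended to negative `u`. -/
noncomputable def huberSq (ξ u : ℝ) : ℝ := if u ≤ ξ ^ 2 then u / (2 * ξ) else √u - ξ / 2

lemma huber_sqrt {ξ u : ℝ} (hξ : 0 < ξ) (hu : 0 ≤ u) : huber ξ √u = huberSq ξ u := by
  simp only [huber, huberSq, abs_of_nonneg (Real.sqrt_nonneg u), Real.sq_sqrt hu,
    Real.sqrt_le_left hξ.le]

lemma huberSq_of_ge {ξ u : ℝ} (hξ : 0 < ξ) (hu : ξ ^ 2 ≤ u) : huberSq ξ u = √u - ξ / 2 := by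
  rcases hu.eq_or_lt with rfl | h
  · rw [huberSq, if_pos le_rfl, Real.sqrt_sq hξ.le]
    field_simp
    ring
  · rw [huberSq, if_neg h.not_ge]

lemma hasDerivAt_huberSq {ξ : ℝ} (hξ : 0 < ξ) (u : ℝ) :
    HasDerivAt (huberSq ξ) (1 / (2 * max ξ √u)) u := by
  have hlin : HasDerivAt (fun v : ℝ => v / (2 * ξ)) (1 / (2 * ξ)) u :=
    (hasDerivAt_id u).div_const _
  have hroot (h : ξ ^ 2 ≤ u) : HasDerivAt (fun v : ℝ => √v - ξ / 2) (1 / (2 * √u)) u :=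
    (Real.hasDerivAt_sqrt (lt_of_lt_of_le (pow_pos hξ 2) h).ne').sub_const _
  rcases lt_trichotomy u (ξ ^ 2) with h | h | h
  · rw [max_eq_left ((Real.sqrt_le_left hξ.le).2 h.le)]
    refine hlin.congr_of_eventuallyEq ?_
    filter_upwards [Iio_mem_nhds h] with v hv
    rw [huberSq, if_pos (le_of_lt hv)]
  · -- The one-sided derivatives of the two branches agree at the transition point.
    have hs : √u = ξ := by rw [h, Real.sqrt_sq hξ.le]
    have hr := hroot h.ge
    rw [hs] at hr
    rw [hs, max_self, ← hasDerivWithinAt_univ, ← Set.Iic_union_Ici (a := u)]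
    refine HasDerivWithinAt.union ?_ ?_
    · refine hlin.hasDerivWithinAt.congr_of_mem (fun v hv => ?_) Set.self_mem_Iic
      rw [huberSq, if_pos (h ▸ hv)]
    · refine hr.hasDerivWithinAt.congr_of_mem (fun v hv => ?_) Set.self_mem_Ici
      exact huberSq_of_ge hξ (h ▸ hv)
  · rw [max_eq_right (Real.le_sqrt_of_sq_le h.le)]
    refine (hroot h.le).congr_of_eventuallyEq ?_
    filter_upwards [Ioi_mem_nhds h] with v hv
    exact huberSq_of_ge hξ (le_of_lt hv)

/-- The row functional `m ↦ ∑ j, b j * m j` of a complex row `b`, acting on real vectors. -/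
noncomputable def rowCLM {N : ℕ} (b : Fin N → ℂ) : EuclideanSpace ℝ (Fin N) →L[ℝ] ℂ :=
  ∑ j, (EuclideanSpace.proj j : EuclideanSpace ℝ (Fin N) →L[ℝ] ℝ).smulRight (b j)

lemma mulVec_eq_rowCLM {L N : ℕ} (A : Matrix (Fin L) (Fin N) ℂ) (m : EuclideanSpace ℝ (Fin N))
    (ℓ : Fin L) : A.mulVec (fun j => ((m j : ℝ) : ℂ)) ℓ = rowCLM (A ℓ) m := by
  simp [rowCLM, Matrix.mulVec, dotProduct, _root_.sum_apply, mul_comm]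

lemma rowCLM_single {N : ℕ} (b : Fin N → ℂ) (n : Fin N) :
    rowCLM b (EuclideanSpace.single n 1) = b n := by
  simp [rowCLM, _root_.sum_apply]

lemma hasFDerivAt_regularizer {L T N : ℕ} (B : Fin T → Matrix (Fin L) (Fin N) ℂ) (lam : ℝ)
    {ξ : ℝ} (hξ : 0 < ξ) (m : EuclideanSpace ℝ (Fin N)) :
    HasFDerivAt (fun m' : EuclideanSpace ℝ (Fin N) =>
      lam * ∑ ℓ, huber ξ (Real.sqrt (∑ t, ‖(B t).mulVec (fun j => ((m' j : ℝ) : ℂ)) ℓ‖ ^ 2)))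
      (lam • ∑ ℓ, (1 / (2 * max ξ √(∑ t, ‖rowCLM (B t ℓ) m‖ ^ 2))) •
        ∑ t, 2 • (innerSL ℝ (rowCLM (B t ℓ) m)).comp (rowCLM (B t ℓ))) m := by
  simp only [mulVec_eq_rowCLM, huber_sqrt hξ (Finset.sum_nonneg fun _ _ => sq_nonneg _)]
  refine HasFDerivAt.const_mul (HasFDerivAt.fun_sum fun ℓ _ => ?_) lam
  refine (hasDerivAt_huberSq hξ _).comp_hasFDerivAt m ?_
  exact HasFDerivAt.fun_sum fun t _ => (rowCLM (B t ℓ)).hasFDerivAt.norm_sq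

lemma gradient_apply_eq_fderiv {N : ℕ} (f : EuclideanSpace ℝ (Fin N) → ℝ)
    (m : EuclideanSpace ℝ (Fin N)) (n : Fin N) :
    gradient f m n = fderiv ℝ f m (EuclideanSpace.single n 1) := by
  have h : inner ℝ (gradient f m) (EuclideanSpace.single n 1)
      = fderiv ℝ f m (EuclideanSpace.single n 1) := by
    rw [gradient, InnerProductSpace.toDual_symm_apply]
  rw [← h, EuclideanSpace.inner_single_right]
  simp

theorem gradient_huber_composite_regularizer {L T N : ℕ}
    (B : Fin T → Matrix (Fin L) (Fin N) ℂ) (lam : ℝ) (hlam : 0 < lam)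
    (ξ : ℝ) (hξ : 0 < ξ) :
    Differentiable ℝ (fun m : EuclideanSpace ℝ (Fin N) =>
      lam * ∑ ℓ, huber ξ (Real.sqrt (∑ t, ‖(B t).mulVec (fun n => ((m n : ℝ) : ℂ)) ℓ‖ ^ 2))) ∧
    ∀ (m : EuclideanSpace ℝ (Fin N)) (n : Fin N),
      gradient (fun m' : EuclideanSpace ℝ (Fin N) =>
          lam * ∑ ℓ, huber ξ (Real.sqrt (∑ t, ‖(B t).mulVec (fun j => ((m' j : ℝ) : ℂ)) ℓ‖ ^ 2))) m n
        = ((lam : ℂ) * ∑ t, (B t)ᴴ.mulVec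
            (fun ℓ => ((1 / max ξ (Real.sqrt (∑ s, ‖(B s).mulVec (fun j => ((m j : ℝ) : ℂ)) ℓ‖ ^ 2)) : ℝ) : ℂ)
              * (B t).mulVec (fun j => ((m j : ℝ) : ℂ)) ℓ) n).re := by
  refine ⟨fun m => (hasFDerivAt_regularizer B lam hξ m).differentiableAt, fun m n => ?_⟩
  rw [gradient_apply_eq_fderiv, (hasFDerivAt_regularizer B lam hξ m).fderiv]
  simp only [mulVec_eq_rowCLM]
  simp only [Matrix.mulVec, dotProduct, Matrix.conjTranspose_apply]
  rw [Finset.sum_comm, Complex.re_ofReal_mul, Complex.re_sum]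
  simp only [_root_.smul_apply, _root_.sum_apply, smul_eq_mul,
    ContinuousLinearMap.comp_apply, rowCLM_single, innerSL_apply_apply, Complex.re_sum,
    Finset.mul_sum]
  refine Finset.sum_congr rfl fun ℓ _ => Finset.sum_congr rfl fun t _ => ?_
  rw [mul_left_comm (star _), Complex.re_ofReal_mul, Complex.inner]
  simp only [Complex.mul_re, Complex.conj_re, Complex.conj_im, Complex.star_def, nsmul_eq_mul,
    Nat.cast_ofNat, one_div, mul_inv]
  ring
end

section
/- Let H : ℝ^{N₁} × ℝ^{N₂} → ℝ be such that for each fixed y the map x ↦ H(x,y) is differentiable, let F : ℝ^{N₁} → ℝ ∪ {+∞}, G : ℝ^{N₂} → ℝ ∪ {+∞}, and Ψ(x,y) = H(x,y) + F(x) + G(y). Fix x̂ ∈ ℝ^{N₁} and ŷ ∈ ℝ^{N₂}, and suppose a nonnegative vector L₁(ŷ) ∈ ℝ^{N₁} satisfies ⟨∇ₓH(x₁,ŷ) − ∇ₓH(x₂,ŷ), x₁ − x₂⟩ ≤ Σₙ (L₁(ŷ))ₙ (x₁ₙ − x₂ₙ)² for all x₁, x₂. Let c ∈ ℝ^{N₁}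 have strictly positive entries with cₙ ≥ (L₁(ŷ))ₙ for all n, define wₙ = x̂ₙ − (1/cₙ)(∇ₓH(x̂,ŷ))ₙ, and let x⁺ be any minimizer over ℝ^{N₁} of x ↦ F(x) + (1/2)Σₙ cₙ (xₙ − wₙ)². Then Ψ(x⁺, ŷ) ≤ Ψ(x̂, ŷ); that is, one proximal-linearized step with uncoupled coordinatewise step sizes does not increase the objective. (Monotonic decrease of PALM with uncoupled step sizes.) -/
/-!
The one-sided bound on the gradient gives a descent lemma with a diagonal quadratic term,
`f z ≤ f x + ⟪∇f x, z - x⟫ + (1/2) ∑ Lₙ (zₙ - xₙ)²` (`descent_lemma_diagonal`), by comparing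
derivatives along the segment from `x` to `z`. Comparing the minimizer `xplus` with the competitor
`xhat` in the proximal problem and expanding the squares gives
`F xplus + ⟪∇f xhat, xplus - xhat⟫ + (1/2) ∑ cₙ (xplusₙ - xhatₙ)² ≤ F xhat`. Adding the two
inequalities and using `Lₙ ≤ cₙ` yields the claim.
-/


open scoped RealInnerProductSpace

/-- Descent lemma with coordinatewise constants: only a one-sided (monotonicity-type) bound on the
gradient is needed, not Lipschitz continuity, nor even continuity, of the gradient. -/
lemma descent_lemma_diagonal {N : ℕ} (f : EuclideanSpace ℝ (Fin N) → ℝ) (hf : Differentiable ℝ f)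
    (L : Fin N → ℝ)
    (hL : ∀ x₁ x₂ : EuclideanSpace ℝ (Fin N),
      ⟪gradient f x₁ - gradient f x₂, x₁ - x₂⟫ ≤ ∑ n, L n * (x₁ n - x₂ n) ^ 2)
    (x z : EuclideanSpace ℝ (Fin N)) :
    f z ≤ f x + ⟪gradient f x, z - x⟫ + (1 / 2) * ∑ n, L n * (z n - x n) ^ 2 := by
  set d := z - x with hd
  set S := ∑ n, L n * (z n - x n) ^ 2 with hS
  let φ : ℝ → ℝ := fun t => f (x + t • d) - t * ⟪gradient f x, d⟫ - t ^ 2 / 2 * S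
  have hφ : ∀ t, HasDerivAt φ
      (⟪gradient f (x + t • d), d⟫ - ⟪gradient f x, d⟫ - t * S) t := by
    intro t
    have h1 : HasDerivAt (fun s : ℝ => x + s • d) d t := by
      simpa using ((hasDerivAt_id t).smul_const d).const_add x
    have h2 := (hf (x + t • d)).hasGradientAt.hasFDerivAt.comp_hasDerivAt t h1
    have h3 := (hasDerivAt_id t).mul_const ⟪gradient f x, d⟫
    have h4 := (((hasDerivAt_id t).pow 2).div_const 2).mul_const S
    refine ((h2.sub h3).sub h4).congr_deriv ?_
    simp [InnerProductSpace.toDual_apply_apply]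
  have hanti : AntitoneOn φ (Set.Icc 0 1) := by
    refine antitoneOn_of_deriv_nonpos (convex_Icc 0 1)
      (fun t _ => (hφ t).continuousAt.continuousWithinAt)
      (fun t _ => (hφ t).differentiableAt.differentiableWithinAt) ?_
    intro t ht
    rw [interior_Icc] at ht
    rw [(hφ t).deriv]
    -- The gradient bound for the pair `x + t • d`, `x` is `t` times the desired inequality.
    have h := hL (x + t • d) x
    have e : ∑ n, L n * ((x + t • d) n - x n) ^ 2 = t * (t * S) := by
      rw [hS, Finset.mul_sum, Finset.mul_sum]
      refine Finset.sum_congr rfl fun n _ => ?_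
      simp [hd]
      ring
    rw [e, add_sub_cancel_left, inner_smul_right, inner_sub_left] at h
    have := le_of_mul_le_mul_left h ht.1
    linarith
  have h := hanti (Set.left_mem_Icc.2 zero_le_one) (Set.right_mem_Icc.2 zero_le_one) zero_le_one
  simp only [φ] at h
  have hz : x + (1 : ℝ) • d = z := by simp [hd]
  rw [hz] at h
  simp only [zero_smul, add_zero] at h
  linarith

theorem palm_uncoupled_step_monotone_decrease {N₁ N₂ : ℕ}
    (H : EuclideanSpace ℝ (Fin N₁) → EuclideanSpace ℝ (Fin N₂) → ℝ)
    (hH : ∀ y, Differentiable ℝ (fun x => H x y))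
    (F : EuclideanSpace ℝ (Fin N₁) → EReal) (hF : ∀ x, F x ≠ ⊥)
    (G : EuclideanSpace ℝ (Fin N₂) → EReal) (hG : ∀ y, G y ≠ ⊥)
    (xhat : EuclideanSpace ℝ (Fin N₁)) (yhat : EuclideanSpace ℝ (Fin N₂))
    (L₁ : Fin N₁ → ℝ) (hL : ∀ n, 0 ≤ L₁ n)
    (hbound : ∀ x₁ x₂ : EuclideanSpace ℝ (Fin N₁),
      ⟪gradient (fun x => H x yhat) x₁ - gradient (fun x => H x yhat) x₂, x₁ - x₂⟫
        ≤ ∑ n, L₁ n * (x₁ n - x₂ n) ^ 2)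
    (c : Fin N₁ → ℝ) (hcpos : ∀ n, 0 < c n) (hc : ∀ n, L₁ n ≤ c n)
    (w : EuclideanSpace ℝ (Fin N₁))
    (hw : ∀ n, w n = xhat n - (1 / c n) * gradient (fun x => H x yhat) xhat n)
    (xplus : EuclideanSpace ℝ (Fin N₁))
    (hfin : F xplus + (((1 / 2) * ∑ n, c n * (xplus n - w n) ^ 2 : ℝ) : EReal) ≠ ⊤)
    (hmin : ∀ x : EuclideanSpace ℝ (Fin N₁),
      F xplus + (((1 / 2) * ∑ n, c n * (xplus n - w n) ^ 2 : ℝ) : EReal)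
        ≤ F x + (((1 / 2) * ∑ n, c n * (x n - w n) ^ 2 : ℝ) : EReal)) :
    ((H xplus yhat : ℝ) : EReal) + F xplus + G yhat
      ≤ ((H xhat yhat : ℝ) : EReal) + F xhat + G yhat := by
  have hdesc := descent_lemma_diagonal (fun x => H x yhat) (hH yhat) L₁ hbound xhat xplus
  have hm := hmin xhat
  set g := gradient (fun x => H x yhat) xhat
  have hLc : ∑ n, L₁ n * (xplus n - xhat n) ^ 2 ≤ ∑ n, c n * (xplus n - xhat n) ^ 2 :=
    Finset.sum_le_sum fun n _ => mul_le_mul_of_nonneg_right (hc n) (sq_nonneg _)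
  -- Completing the square: `w` is chosen so that the proximal term reproduces the linearization.
  have hsq : (1 / 2) * ∑ n, c n * (xplus n - w n) ^ 2 - (1 / 2) * ∑ n, c n * (xhat n - w n) ^ 2
      = ⟪g, xplus - xhat⟫ + (1 / 2) * ∑ n, c n * (xplus n - xhat n) ^ 2 := by
    rw [PiLp.inner_apply, ← mul_sub, ← Finset.sum_sub_distrib, Finset.mul_sum, Finset.mul_sum,
      ← Finset.sum_add_distrib]
    refine Finset.sum_congr rfl fun n _ => ?_
    have := (hcpos n).ne'
    rw [hw n]
    simp only [PiLp.sub_apply, RCLike.inner_apply, conj_trivial]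
    field_simp
    ring
  refine add_le_add_left ?_ (G yhat)
  have hp : F xplus ≠ ⊤ := by
    intro h
    rw [h] at hfin
    exact hfin (EReal.top_add_coe _)
  rcases eq_or_ne (F xhat) ⊤ with ht | ht
  · rw [ht, EReal.coe_add_top]
    exact le_top
  · lift F xplus to ℝ using ⟨hp, hF xplus⟩ with a
    lift F xhat to ℝ using ⟨ht, hF xhat⟩ with b
    norm_cast at hm ⊢
    linarith
end

section
/- Fix m ∈ ℝ^N. The function p ↦ J̃(m,p) = (1/2)‖A(m⊙e^{ip}) − b‖₂² from ℝ^N to ℝ is differentiable, and its gradient at any p ∈ ℝ^N is given coordinatewise by ∇ₚJ̃(m,p) = Im{ e^{−ip} ⊙ m ⊙ [AᴴA(m⊙e^{ip}) − Aᴴb] }, where e^{ip} denotes the vector with entries e^{i pₙ}, and Im{·} extracts the imaginary part elementwise. -/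
/-!
Each residual `r k = (A (m ⊙ e^{ip})) k - b k` is real-differentiable in `p`, with partial derivative
`A k n * m n * (i e^{i pₙ})` in the direction `n`. The chain rule for `‖·‖²` gives the partial
derivative `∑ k, Re (conj (r k) * A k n * m n * i e^{i pₙ})` of the objective; conjugating each term
and using `Re (-i z) = Im z` turns this into the imaginary part of
`e^{-i pₙ} * m n * (Aᴴ r) n`.
-/

open Matrix

/-- The real Fréchet derivative of one component of `A (m ⊙ e^{ip})`. -/
lemma hasFDerivAt_mulVec_phase {M N : ℕ}
    (A : Matrix (Fin M) (Fin N) ℂ) (m : Fin N → ℝ) (k : Fin M) (p : EuclideanSpace ℝ (Fin N)) :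
    HasFDerivAt (fun p : EuclideanSpace ℝ (Fin N) =>
        A.mulVec (fun n => (m n : ℂ) * Complex.exp (Complex.I * (p n : ℂ))) k)
      (∑ j, (A k j * (m j * (Complex.exp (Complex.I * (p j : ℂ)) * Complex.I))) •
        (Complex.ofRealCLM.comp (EuclideanSpace.proj j : EuclideanSpace ℝ (Fin N) →L[ℝ] ℝ))) p := by
  simp only [Matrix.mulVec, dotProduct]
  refine HasFDerivAt.fun_sum fun j _ => ?_
  have h := (((Complex.ofRealCLM.comp (EuclideanSpace.proj j :
    EuclideanSpace ℝ (Fin N) →L[ℝ] ℝ)).hasFDerivAt (x := p)).const_mul Complex.I).cexp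
  have h2 := (h.const_mul (m j : ℂ)).const_mul (A k j)
  refine h2.congr_fderiv ?_
  ext v
  simp [mul_assoc]

theorem gradient_phase_data_fidelity_nonexponentiated {M N : ℕ}
    (A : Matrix (Fin M) (Fin N) ℂ) (b : Fin M → ℂ) (m : Fin N → ℝ) :
    Differentiable ℝ (fun p : EuclideanSpace ℝ (Fin N) =>
      (1 / 2) * ∑ k, ‖A.mulVec (fun n => (m n : ℂ) * Complex.exp (Complex.I * (p n : ℂ))) k - b k‖ ^ 2) ∧
    ∀ (p : EuclideanSpace ℝ (Fin N)) (n : Fin N),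
      gradient (fun p' : EuclideanSpace ℝ (Fin N) =>
          (1 / 2) * ∑ k, ‖A.mulVec (fun j => (m j : ℂ) * Complex.exp (Complex.I * (p' j : ℂ))) k - b k‖ ^ 2) p n
        = (Complex.exp (-Complex.I * (p n : ℂ)) * (m n : ℂ) *
            Aᴴ.mulVec ((A.mulVec fun j => (m j : ℂ) * Complex.exp (Complex.I * (p j : ℂ))) - b) n).im := by
  have key := fun p : EuclideanSpace ℝ (Fin N) =>
    (HasFDerivAt.fun_sum (u := Finset.univ) fun k _ =>
      ((hasFDerivAt_mulVec_phase A m k p).sub_const (b k)).norm_sq).const_mul (1 / 2 : ℝ)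
  refine ⟨fun p => (key p).differentiableAt, fun p n => ?_⟩
  -- A coordinate of the gradient is the Fréchet derivative applied to a standard basis vector.
  have coord : ∀ v : EuclideanSpace ℝ (Fin N),
      v n = inner ℝ v (EuclideanSpace.single n (1 : ℝ)) := fun v => by
    simp [EuclideanSpace.inner_single_right]
  rw [coord, gradient, InnerProductSpace.toDual_symm_apply, (key p).fderiv]
  have hexp : Complex.exp (-Complex.I * (p n : ℂ))
      = (starRingEnd ℂ) (Complex.exp (Complex.I * (p n : ℂ))) := by
    rw [← Complex.exp_conj]; simp
  have hdir : ∀ k, (∑ j, (A k j * (m j * (Complex.exp (Complex.I * (p j : ℂ)) * Complex.I))) •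
        (Complex.ofRealCLM.comp (EuclideanSpace.proj j : EuclideanSpace ℝ (Fin N) →L[ℝ] ℝ)))
        (EuclideanSpace.single n (1 : ℝ))
      = A k n * (m n * (Complex.exp (Complex.I * (p n : ℂ)) * Complex.I)) := fun k => by
    simp [_root_.sum_apply, apply_ite]
  rw [hexp]
  have hadj : ∀ v : Fin M → ℂ, Aᴴ.mulVec v n = ∑ k, star (A k n) * v k := fun v => rfl
  rw [hadj, Finset.mul_sum, Complex.im_sum]
  simp only [_root_.smul_apply, _root_.sum_apply, Finset.smul_sum]
  refine Finset.sum_congr rfl fun k _ => ?_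
  rw [ContinuousLinearMap.comp_apply, hdir k, Pi.sub_apply]
  -- The residual enters only as a complex number from here on.
  generalize A.mulVec (fun j => (m j : ℂ) * Complex.exp (Complex.I * (p j : ℂ))) k - b k = r
  generalize Complex.exp (Complex.I * (p n : ℂ)) = e
  simp [Complex.inner]
  ring
end
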